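/- Let R be an integral domain, let t, s be natural numbers, and let ι = Fin t ⊕ Fin s be the index type for square matrices of size t + s over R. Let D be a t×t diagonal matrix over R all of whose diagonal entries are nonzero, and set Φ = fromBlocks(D, 0, 0, 0). Let U, V, Q be invertible ι×ι matrices over R and set B = V⁻¹ · Φ · U⁻¹. Let S be an ι×ι matrix over R whose top-right t×s block is zero, i.e. S = fromBlocks(S₁₁, 0, S₂₁, S₂₂), and set A = B · (U · S · Q⁻¹) and N = U · fromBlocks(S₁₁, 0, 0, 0) · Q⁻¹. Then B·N = A, and for every ι×ι matrix X over R with B·X = A one has N = (U · fromBlocks(I_t, 0, 0, 0) · U⁻¹) · X. In particular N is a solution of B·X = A that is a left multiple of every solution, i.e. N is a left least common multiple of the solution set. -/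

import Mathlib

/-!
In the coordinates given by `U`, multiplication by `Φ = fromBlocks D 0 0 0` sees only the top block
of rows, and it determines that block because `D` can be cancelled on the left. Hence all solutions
of `B * X = A` share the top block of `U⁻¹ * X`, and the projection onto that block sends each of
them to the same matrix `N`, which is the solution whose bottom block vanishes.
-/

open Matrix Function

section Cancellation

variable {R k l m : Type*} [Fintype m]

theorem mul_right_injective_of_mulVec_injective [NonUnitalSemiring R] {A : Matrix k m R}
    (hA : Injective A.mulVec) : Injective fun Y : Matrix m l R => A * Y := by
  cases isEmpty_or_nonempty l
  · exact injective_of_subsingleton _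
  · exact mul_right_injective_iff_mulVec_injective.mpr hA

theorem diagonal_mulVec_injective [NonUnitalNonAssocSemiring R] [DecidableEq m] {d : m → R}
    (hd : ∀ i, IsLeftRegular (d i)) : Injective (diagonal d).mulVec := by
  intro v w hvw
  ext i
  apply hd i
  simpa only [mulVec_diagonal] using congrFun hvw i

end Cancellation

section Blocks

variable {R k k' l m n p q r r' : Type*} [Semiring R]

theorem fromBlocks_mul_eq_fromRows [Fintype p] [Fintype q] (A : Matrix m p R) (B : Matrix m q R)
    (C : Matrix n p R) (D : Matrix n q R) (W : Matrix (p ⊕ q) l R) :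
    fromBlocks A B C D * W = fromRows (fromCols A B * W) (fromCols C D * W) := by
  rw [← fromRows_fromCols_eq_fromBlocks, fromRows_mul]

theorem fromBlocks_topLeft_mul [Fintype m] [Fintype n] (D : Matrix k m R)
    (Y : Matrix (m ⊕ n) l R) :
    (fromBlocks D 0 0 0 : Matrix (k ⊕ k') (m ⊕ n) R) * Y = fromRows (D * Y.toRows₁) 0 := by
  rw [← fromRows_toRows Y, fromBlocks_mul_fromRows]
  simp only [Matrix.zero_mul, add_zero, toRows₁_fromRows]

theorem mul_fromBlocks_topLeft_mul_eq_iff [Fintype k] [Fintype k'] [Fintype m] [Fintype n]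
    {V : Matrix r (k ⊕ k') R} (hV : Injective V.mulVec) {D : Matrix k m R}
    (hD : Injective D.mulVec) {Y Z : Matrix (m ⊕ n) l R} :
    letI Φ : Matrix (k ⊕ k') (m ⊕ n) R := fromBlocks D 0 0 0
    V * Φ * Y = V * Φ * Z ↔ Y.toRows₁ = Z.toRows₁ := by
  rw [Matrix.mul_assoc, Matrix.mul_assoc, (mul_right_injective_of_mulVec_injective hV).eq_iff,
    fromBlocks_topLeft_mul, fromBlocks_topLeft_mul, fromRows_inj.eq_iff,
    (mul_right_injective_of_mulVec_injective hD).eq_iff, and_iff_left rfl]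

theorem lcm_explicit_form_general [Fintype k] [Fintype k'] [Fintype m] [Fintype n] [Fintype p]
    [Fintype q] [Fintype r] [DecidableEq m] [DecidableEq n]
    {D : Matrix k m R} (hD : Injective D.mulVec)
    {V' : Matrix r' (k ⊕ k') R} (hV' : Injective V'.mulVec)
    {U : Matrix r (m ⊕ n) R} {U' : Matrix (m ⊕ n) r R} (hU : U' * U = 1)
    (S₁₁ : Matrix m p R) (S₁₂ : Matrix m q R) (S₂₁ : Matrix n p R) (S₂₂ : Matrix n q R)
    (Q' : Matrix (p ⊕ q) l R) :
    letI Φ : Matrix (k ⊕ k') (m ⊕ n) R := fromBlocks D 0 0 0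
    letI P : Matrix (m ⊕ n) (m ⊕ n) R := fromBlocks 1 0 0 0
    letI B := V' * Φ * U'
    letI A := B * (U * fromBlocks S₁₁ S₁₂ S₂₁ S₂₂ * Q')
    letI N := U * (fromBlocks S₁₁ S₁₂ 0 0 : Matrix (m ⊕ n) (p ⊕ q) R) * Q'
    B * N = A ∧ ∀ X : Matrix r l R, B * X = A → N = (U * P * U') * X := by
  have hS (T₁ : Matrix n p R) (T₂ : Matrix n q R) :
      (U' * (U * fromBlocks S₁₁ S₁₂ T₁ T₂ * Q')).toRows₁ = fromCols S₁₁ S₁₂ * Q' := by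
    rw [Matrix.mul_assoc, ← Matrix.mul_assoc U', hU, Matrix.one_mul, fromBlocks_mul_eq_fromRows,
      toRows₁_fromRows]
  have h_solution_iff (X : Matrix r l R) :
      letI Φ : Matrix (k ⊕ k') (m ⊕ n) R := fromBlocks D 0 0 0
      V' * Φ * U' * X = V' * Φ * U' * (U * fromBlocks S₁₁ S₁₂ S₂₁ S₂₂ * Q') ↔
        (U' * X).toRows₁ = fromCols S₁₁ S₁₂ * Q' := by
    rw [Matrix.mul_assoc _ U', Matrix.mul_assoc _ U', mul_fromBlocks_topLeft_mul_eq_iff hV' hD, hS]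
  refine ⟨(h_solution_iff _).mpr (hS 0 0), fun X hX => ?_⟩
  rw [Matrix.mul_assoc, Matrix.mul_assoc, Matrix.mul_assoc, fromBlocks_topLeft_mul,
    (h_solution_iff X).mp hX, Matrix.one_mul, fromBlocks_mul_eq_fromRows, fromCols_zero,
    Matrix.zero_mul]

end Blocks

/-- For `B = V⁻¹ * Φ * U⁻¹` with `Φ = fromBlocks(D, 0, 0, 0)`, `D` diagonal
with nonzero diagonal entries, and `A = B * (U * S * Q⁻¹)` where the top-right
block of `S` vanishes, the matrix `N = U * fromBlocks(S₁₁, 0, 0, 0) * Q⁻¹` is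
a solution of `B * X = A` that is a left multiple of every solution. -/
theorem lcm_explicit_form
    (R : Type*) [CommRing R] [IsDomain R] (t s : ℕ)
    (d : Fin t → R) (hd : ∀ i, d i ≠ 0)
    (U V Q : Matrix (Fin t ⊕ Fin s) (Fin t ⊕ Fin s) R)
    (hU : IsUnit U) (hV : IsUnit V) (hQ : IsUnit Q)
    (S₁₁ : Matrix (Fin t) (Fin t) R) (S₂₁ : Matrix (Fin s) (Fin t) R)
    (S₂₂ : Matrix (Fin s) (Fin s) R) :
    letI Φ : Matrix (Fin t ⊕ Fin s) (Fin t ⊕ Fin s) R :=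
      Matrix.fromBlocks (Matrix.diagonal d) 0 0 0
    letI B := V⁻¹ * Φ * U⁻¹
    letI S : Matrix (Fin t ⊕ Fin s) (Fin t ⊕ Fin s) R :=
      Matrix.fromBlocks S₁₁ 0 S₂₁ S₂₂
    letI A := B * (U * S * Q⁻¹)
    letI N := U * Matrix.fromBlocks S₁₁ 0 0 0 * Q⁻¹
    B * N = A ∧
      ∀ X : Matrix (Fin t ⊕ Fin s) (Fin t ⊕ Fin s) R,
        B * X = A →
          N = (U * Matrix.fromBlocks 1 0 0 0 * U⁻¹) * X := by
  exact lcm_explicit_form_general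
    (diagonal_mulVec_injective fun i => (IsRegular.of_ne_zero (hd i)).left)
    (mulVec_injective_of_isUnit (isUnit_nonsing_inv_iff.mpr hV))
    (nonsing_inv_mul U ((isUnit_iff_isUnit_det U).mp hU)) S₁₁ 0 S₂₁ S₂₂ Q⁻¹
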